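/- Let m ≥ 2 be an integer, r_m := √(2(m+1)/m), and define Φ(x) := (1/2)·√(m/(2(m+1)))·F_m(x,x) for x ∈ ℝ^{m+1}. Then for all x, y ∈ ℝ^{m+1} with ‖x‖ = ‖y‖ = r_m: ‖Φ(x) − Φ(y)‖² = −(m/(2(m+1)))·⟨x,y⟩² + 2(m+1)/m. Equivalently, ‖F_m(x,x) − F_m(y,y)‖² = −4(⟨x,y⟩² − (2(m+1)/m)²). -/

import Mathlib

open RealInnerProductSpace

/-- Dimension of the target of `F_{k+1}`: `dimF k = (k+1)(k+4)/2`. -/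
def dimF : ℕ → ℕ
  | 0 => 2
  | (k + 1) => dimF k + (k + 3)

/-- The recursively defined maps `F_{k+1} : ℝ^{k+2} × ℝ^{k+2} → ℝ^{(k+1)(k+4)/2}`
(indexed so that `F k` is the map called `F_{k+1}` in the paper, i.e. `F_m = F (m-1)`):
`F_1((x₁,x₂),(y₁,y₂)) = (x₁y₁ − x₂y₂, x₁y₂ + x₂y₁)` and
`F_{m+1}((x,x_{m+2}),(y,y_{m+2}))
  = (F_m(x,y), x_{m+2}y + y_{m+2}x, τ_{m+1}(⟨x,y⟩ − (m+1)x_{m+2}y_{m+2}))`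
with `τ_{m+1} = √(2/((m+1)(m+2)))`. -/
noncomputable def F : (k : ℕ) → (Fin (k + 2) → ℝ) → (Fin (k + 2) → ℝ) → (Fin (dimF k) → ℝ)
  | 0, x, y => ![x 0 * y 0 - x 1 * y 1, x 0 * y 1 + x 1 * y 0]
  | (k + 1), x, y =>
      Fin.append (m := dimF k + (k + 2)) (n := 1)
        (Fin.append
          (F k (fun i => x i.castSucc) (fun i => y i.castSucc))
          (fun i : Fin (k + 2) =>
            x (Fin.last (k + 2)) * y i.castSucc + y (Fin.last (k + 2)) * x i.castSucc))
        (fun _ : Fin 1 =>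
          Real.sqrt (2 / (((k : ℝ) + 2) * ((k : ℝ) + 3))) *
            ((∑ i : Fin (k + 2), x i.castSucc * y i.castSucc)
              - ((k : ℝ) + 2) * x (Fin.last (k + 2)) * y (Fin.last (k + 2))))

/-- The canonical identification of `Fin n → ℝ` with Euclidean space (used for norms
and inner products). -/
noncomputable def toE {n : ℕ} (v : Fin n → ℝ) : EuclideanSpace ℝ (Fin n) :=
  (EuclideanSpace.equiv (Fin n) ℝ).symm v

/-- Inner products of the diagonal values of `F`. -/
theorem sum_F_diag : ∀ (k : ℕ) (x y : Fin (k + 2) → ℝ),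
    ∑ i, F k x x i * F k y y i
      = 2 * ((∑ i, x i * y i) ^ 2 - (∑ i, x i * x i) * (∑ i, y i * y i) / ((k : ℝ) + 2))
  | 0, x, y => by
    change ∑ i : Fin 2, F 0 x x i * F 0 y y i = _
    simp [F, Fin.sum_univ_two]
    ring
  | (k + 1), x, y => by
    have ih := sum_F_diag k (fun i => x i.castSucc) (fun i => y i.castSucc)
    have h0 : (0 : ℝ) < (k : ℝ) + 2 := by positivity
    have h1 : (0 : ℝ) < (k : ℝ) + 3 := by positivity
    have hs : Real.sqrt (2 / (((k : ℝ) + 2) * ((k : ℝ) + 3))) ^ 2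
        = 2 / (((k : ℝ) + 2) * ((k : ℝ) + 3)) := Real.sq_sqrt (by positivity)
    have hm : ∑ i : Fin (k + 2),
        (x (Fin.last (k + 2)) * x i.castSucc + x (Fin.last (k + 2)) * x i.castSucc) *
        (y (Fin.last (k + 2)) * y i.castSucc + y (Fin.last (k + 2)) * y i.castSucc)
        = 4 * x (Fin.last (k + 2)) * y (Fin.last (k + 2)) *
          ∑ i : Fin (k + 2), x i.castSucc * y i.castSucc := by
      rw [Finset.mul_sum]
      exact Finset.sum_congr rfl fun i _ => by ring
    change ∑ i : Fin (dimF k + (k + 2) + 1), F (k + 1) x x i * F (k + 1) y y i = _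
    rw [Fin.sum_univ_add, Fin.sum_univ_add]
    simp only [F, Fin.append_left, Fin.append_right]
    rw [ih, hm]
    rw [Fin.sum_univ_castSucc (n := k + 2) (fun i => x i * y i),
      Fin.sum_univ_castSucc (n := k + 2) (fun i => x i * x i),
      Fin.sum_univ_castSucc (n := k + 2) (fun i => y i * y i)]
    simp only [Finset.univ_unique, Finset.sum_singleton]
    generalize (∑ i : Fin (k + 2), x i.castSucc * y i.castSucc) = a
    generalize (∑ i : Fin (k + 2), x i.castSucc * x i.castSucc) = X
    generalize (∑ i : Fin (k + 2), y i.castSucc * y i.castSucc) = Y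
    generalize x (Fin.last (k + 2)) = s
    generalize y (Fin.last (k + 2)) = t
    generalize Real.sqrt (2 / (((k : ℝ) + 2) * ((k : ℝ) + 3))) = r at hs ⊢
    have e : r * (X - ((k : ℝ) + 2) * s * s) * (r * (Y - ((k : ℝ) + 2) * t * t))
        = r ^ 2 * ((X - ((k : ℝ) + 2) * s * s) * (Y - ((k : ℝ) + 2) * t * t)) := by ring
    have e3 : ((k + 1 : ℕ) : ℝ) + 2 = (k : ℝ) + 3 := by push_cast; ring
    rw [e, hs, e3]
    field_simp
    ring

theorem inner_toE {n : ℕ} (u v : Fin n → ℝ) : ⟪toE u, toE v⟫ = ∑ i, u i * v i := by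
  simp [toE, PiLp.inner_apply, mul_comm]

theorem inner_toE_F (k : ℕ) (x y : Fin (k + 2) → ℝ) :
    ⟪toE (F k x x), toE (F k y y)⟫
      = 2 * (⟪toE x, toE y⟫ ^ 2 - ‖toE x‖ ^ 2 * ‖toE y‖ ^ 2 / ((k : ℝ) + 2)) := by
  rw [← real_inner_self_eq_norm_sq, ← real_inner_self_eq_norm_sq]
  simp only [inner_toE]
  exact sum_F_diag k x y

/-- For an integer `m ≥ 2` (here `m = k+2`), `r_m = √(2(m+1)/m)`, and the map
`Φ(x) = (1/2)√(m/(2(m+1)))·F_m(x,x)`: for all `x, y ∈ ℝ^{m+1}` with `‖x‖ = ‖y‖ = r_m`,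
`‖Φ(x) − Φ(y)‖² = −(m/(2(m+1)))⟨x,y⟩² + 2(m+1)/m`, equivalently
`‖F_m(x,x) − F_m(y,y)‖² = −4(⟨x,y⟩² − (2(m+1)/m)²)`. -/
theorem norm_sq_Phi_diff (k : ℕ) (x y : Fin (k + 3) → ℝ)
    (hx : ‖toE x‖ = Real.sqrt (2 * ((k : ℝ) + 3) / ((k : ℝ) + 2)))
    (hy : ‖toE y‖ = Real.sqrt (2 * ((k : ℝ) + 3) / ((k : ℝ) + 2))) :
    ‖((1 : ℝ)/2 * Real.sqrt (((k : ℝ) + 2) / (2 * ((k : ℝ) + 3)))) • toE (F (k + 1) x x)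
        - ((1 : ℝ)/2 * Real.sqrt (((k : ℝ) + 2) / (2 * ((k : ℝ) + 3)))) • toE (F (k + 1) y y)‖^2
      = -(((k : ℝ) + 2) / (2 * ((k : ℝ) + 3))) * ⟪toE x, toE y⟫^2
        + 2 * ((k : ℝ) + 3) / ((k : ℝ) + 2) ∧
    ‖toE (F (k + 1) x x) - toE (F (k + 1) y y)‖^2
      = -4 * (⟪toE x, toE y⟫^2 - (2 * ((k : ℝ) + 3) / ((k : ℝ) + 2))^2) := by
  have h0 : (0 : ℝ) < (k : ℝ) + 2 := by positivity
  have h1 : (0 : ℝ) < (k : ℝ) + 3 := by positivity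
  have hX : ‖toE x‖ ^ 2 = 2 * ((k : ℝ) + 3) / ((k : ℝ) + 2) := by
    rw [hx]; exact Real.sq_sqrt (by positivity)
  have hY : ‖toE y‖ ^ 2 = 2 * ((k : ℝ) + 3) / ((k : ℝ) + 2) := by
    rw [hy]; exact Real.sq_sqrt (by positivity)
  have e3 : ((k + 1 : ℕ) : ℝ) + 2 = (k : ℝ) + 3 := by push_cast; ring
  have main : ‖toE (F (k + 1) x x) - toE (F (k + 1) y y)‖^2
      = -4 * (⟪toE x, toE y⟫^2 - (2 * ((k : ℝ) + 3) / ((k : ℝ) + 2))^2) := by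
    rw [norm_sub_sq_real, ← real_inner_self_eq_norm_sq (toE (F (k + 1) x x)),
      ← real_inner_self_eq_norm_sq (toE (F (k + 1) y y)),
      inner_toE_F, inner_toE_F, inner_toE_F, real_inner_self_eq_norm_sq,
      real_inner_self_eq_norm_sq, hX, hY, e3]
    field_simp
    ring
  refine ⟨?_, main⟩
  rw [← smul_sub, norm_smul, mul_pow, main, Real.norm_eq_abs, sq_abs, mul_pow,
    Real.sq_sqrt (by positivity)]
  field_simp
  ring
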